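/- Let n ≥ 2 be an integer and let T_n(t) = Σ_{m=1}^n (a_m cos mt + b_m sin mt) be a trigonometric polynomial. For each ν ∈ {1,…,n}, let t_1,…,t_{2n+1} ∈ [0,2π) be the arguments of the roots of the polynomial s_n(z) + z^{2n+1} s_n(1/z), where s_n(z) := Σ_{j=0}^{⌊n/ν⌋} (−z^ν)^j / (ν^j j!). Then the Fourier coefficients of T_n are given by a_ν = Σ_{k=1}^{2n+1} T_n(−t_k) and b_ν = Σ_{k=1}^{2n+1} T_n(π/(2ν) − t_k). -/

import Mathlib

/-!
Write `z_k = exp (i t_k)` and let `p_m = ∑ z_k ^ m`. The claim reduces to `p_m = 1` for `m = ν` and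
`p_m = 0` for the other `m ∈ {1, …, n}` (`sum_pow_roots`): by the addition formulas
(`sum_harmonic`), summing over the nodes `c - t_k` then kills every harmonic of `T_n` except the
`ν`-th and returns the value of that one at `c`, which is `a_ν` for `c = 0` and `b_ν` for
`c = π/(2ν)`.

The power sums are computed from Newton's identities. The polynomial is monic of degree `2n+1`, and
its `n+1` top coefficients are those of `s_n` in reverse order (`coeff_harmPoly`), that is, the
Taylor coefficients `c_i` of `exp (-z^ν/ν)`. Hence `(-1)^i e_i = c_i` for `i ≤ n`, and Newton's
identities read `p_m = -m c_m - ∑_{0<i<m} c_i p_{m-i}`. The values above solve this recursion because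
`m c_m = -c_{m-ν}` for `m ≥ ν` (`mul_expCoeff`), while `c_0 = 1` and
`c_m = 0` for `0 < m < ν`.
-/

open Complex Polynomial Finset

/-- The polynomial `s_n(z) + z^{2n+1} s_n(1/z)`, where
`s_n(z) = ∑_{j=0}^{⌊n/ν⌋} (−z^ν)^j/(ν^j j!)`. -/
noncomputable def harmPoly (n ν : ℕ) : Polynomial ℂ :=
  (∑ j ∈ Finset.range (n / ν + 1),
      Polynomial.C ((-1 : ℂ) ^ j / ((ν : ℂ) ^ j * (Nat.factorial j : ℂ))) *
        Polynomial.X ^ (ν * j)) +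
  ∑ j ∈ Finset.range (n / ν + 1),
      Polynomial.C ((-1 : ℂ) ^ j / ((ν : ℂ) ^ j * (Nat.factorial j : ℂ))) *
        Polynomial.X ^ (2 * n + 1 - ν * j)

/-- The coefficient of `z^i` in `s_n(z)`, for `i ≤ n`; equivalently the Taylor coefficient of
`exp (-z^ν/ν)`. -/
noncomputable def expCoeff (ν i : ℕ) : ℂ :=
  if ν ∣ i then (-1 : ℂ) ^ (i / ν) / ((ν : ℂ) ^ (i / ν) * (Nat.factorial (i / ν) : ℂ)) else 0

lemma coeff_harmPoly (n ν : ℕ) (hν : 1 ≤ ν) (i : ℕ) (hi : i ≤ n) :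
    (harmPoly n ν).coeff (2 * n + 1 - i) = expCoeff ν i := by
  have hle : ∀ j ∈ Finset.range (n / ν + 1), ν * j ≤ n := by
    intro j hj
    have : j ≤ n / ν := by simpa [Nat.lt_succ_iff] using hj
    calc ν * j ≤ ν * (n / ν) := Nat.mul_le_mul_left _ this
      _ ≤ n := Nat.mul_div_le n ν
  unfold harmPoly expCoeff
  rw [coeff_add, finsetSum_coeff, finsetSum_coeff]
  simp only [coeff_C_mul_X_pow]
  rw [Finset.sum_eq_zero (fun j hj => if_neg (by have := hle j hj; omega)), zero_add]
  split_ifs with h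
  · obtain ⟨j, rfl⟩ := h
    rw [Nat.mul_div_cancel_left j hν]
    rw [Finset.sum_eq_single j]
    · simp
    · intro b hb hbj
      refine if_neg fun h => hbj ?_
      have := hle b hb
      exact Nat.eq_of_mul_eq_mul_left hν (show ν * b = ν * j by omega)
    · intro hj
      exact absurd (Finset.mem_range.2 (Nat.lt_succ_iff.2
        ((Nat.le_div_iff_mul_le hν).2 (by rw [mul_comm]; exact hi)))) hj
  · refine Finset.sum_eq_zero fun j hj => if_neg fun hh => h ⟨j, ?_⟩
    have := hle j hj
    omega

lemma natDegree_harmPoly (n ν : ℕ) (hν : 1 ≤ ν) : (harmPoly n ν).natDegree = 2 * n + 1 := by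
  refine natDegree_eq_of_le_of_coeff_ne_zero ?_ ?_
  · unfold harmPoly
    refine natDegree_add_le_of_degree_le ?_ ?_ <;>
    · refine natDegree_sum_le_of_forall_le _ _ fun j hj => ?_
      refine (natDegree_C_mul_X_pow_le _ _).trans ?_
      have : j ≤ n / ν := by simpa [Nat.lt_succ_iff] using hj
      have := (Nat.mul_le_mul_left ν this).trans (Nat.mul_div_le n ν)
      omega
  · have := coeff_harmPoly n ν hν 0 (Nat.zero_le _)
    rw [Nat.sub_zero] at this
    simp [this, expCoeff]

/-- The coefficient form of the differential equation `s' = -z^(ν-1) s` of `s = exp (-z^ν/ν)`. -/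
lemma mul_expCoeff (ν : ℕ) (hν : 1 ≤ ν) (i : ℕ) :
    ((i + ν : ℕ) : ℂ) * expCoeff ν (i + ν) = -expCoeff ν i := by
  unfold expCoeff
  by_cases h : ν ∣ i
  · rw [if_pos h, if_pos (by simpa using h)]
    obtain ⟨j, rfl⟩ := h
    have h0 : (ν : ℂ) ≠ 0 := by exact_mod_cast (by omega : ν ≠ 0)
    have h1 : (j : ℂ) + 1 ≠ 0 := by exact_mod_cast Nat.succ_ne_zero j
    have h2 : (Nat.factorial j : ℂ) ≠ 0 := by exact_mod_cast Nat.factorial_ne_zero j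
    rw [show ν * j + ν = ν * (j + 1) by ring, Nat.mul_div_cancel_left _ hν,
      Nat.mul_div_cancel_left _ hν, Nat.factorial_succ]
    push_cast
    field_simp
    ring
  · rw [if_neg h, if_neg (by simpa using h)]
    simp

/-- Newton's identities, with the elementary symmetric functions of the roots read off from the
coefficients of `harmPoly`, show that the `m`-th power sum of the roots is `1` for `m = ν` and `0`
for every other `m ∈ {1, …, n}`. -/
lemma sum_pow_roots (n ν : ℕ) (hν : 1 ≤ ν) (z : Fin (2 * n + 1) → ℂ)
    (hz : (harmPoly n ν).roots = Multiset.map z Finset.univ.val) (m : ℕ) (hm : 1 ≤ m)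
    (hmn : m ≤ n) : ∑ k, z k ^ m = if m = ν then 1 else 0 := by
  have hdeg := natDegree_harmPoly n ν hν
  have hlead : (harmPoly n ν).leadingCoeff = 1 := by
    rw [leadingCoeff, hdeg]
    have := coeff_harmPoly n ν hν 0 (Nat.zero_le _)
    rw [Nat.sub_zero] at this
    simp [this, expCoeff]
  have hcard : Multiset.card (harmPoly n ν).roots = (harmPoly n ν).natDegree := by
    rw [hz, hdeg]; simp
  have hesymm : ∀ i ≤ n, (-1 : ℂ) ^ i *
      MvPolynomial.aeval z (MvPolynomial.esymm (Fin (2 * n + 1)) ℂ i) = expCoeff ν i := by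
    intro i hi
    rw [← coeff_harmPoly n ν hν i hi, coeff_eq_esymm_roots_of_card hcard (by omega), hlead, hdeg,
      show 2 * n + 1 - (2 * n + 1 - i) = i by omega, one_mul,
      MvPolynomial.aeval_esymm_eq_multiset_esymm, hz]
  have hpsum : ∀ i, MvPolynomial.aeval z (MvPolynomial.psum (Fin (2 * n + 1)) ℂ i) =
      ∑ k, z k ^ i := by
    intro i
    simp [MvPolynomial.psum]
  induction m using Nat.strong_induction_on with
  | _ m ih =>
    have newton := congrArg (MvPolynomial.aeval z)
      (MvPolynomial.psum_eq_mul_esymm_sub_sum (Fin (2 * n + 1)) ℂ m hm)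
    rw [hpsum] at newton
    simp only [map_sub, map_mul, map_sum, map_pow, map_neg, map_one, map_natCast, hpsum] at newton
    have hsum : ∑ p ∈ antidiagonal m with p.1 ∈ Set.Ioo 0 m, (-1 : ℂ) ^ p.1 *
        MvPolynomial.aeval z (MvPolynomial.esymm (Fin (2 * n + 1)) ℂ p.1) * ∑ k, z k ^ p.2 =
        ∑ p ∈ antidiagonal m with p.1 ∈ Set.Ioo 0 m,
          if p.2 = ν then expCoeff ν p.1 else 0 := by
      refine Finset.sum_congr rfl fun p hp => ?_
      rw [Finset.mem_filter, Finset.HasAntidiagonal.mem_antidiagonal, Set.mem_Ioo] at hp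
      obtain ⟨hp, hp0, hpm⟩ := hp
      rw [hesymm p.1 (by omega), ih p.2 (by omega) (by omega) (by omega), mul_ite, mul_one,
        mul_zero]
    have hlin : (-1 : ℂ) ^ (m + 1) * m *
        MvPolynomial.aeval z (MvPolynomial.esymm (Fin (2 * n + 1)) ℂ m) =
        -(m * expCoeff ν m) := by
      rw [← hesymm m hmn]
      ring
    rw [hsum, hlin] at newton
    rw [newton]
    rcases lt_trichotomy m ν with h | rfl | h
    · rw [if_neg h.ne, Finset.sum_eq_zero, expCoeff, if_neg (Nat.not_dvd_of_pos_of_lt hm h)]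
      · simp
      · intro p hp
        rw [Finset.mem_filter, Finset.HasAntidiagonal.mem_antidiagonal] at hp
        exact if_neg (by omega)
    · rw [if_pos rfl, Finset.sum_eq_zero]
      · have := mul_expCoeff m hm 0
        rw [zero_add] at this
        rw [this]
        simp [expCoeff]
      · intro p hp
        rw [Finset.mem_filter, Finset.HasAntidiagonal.mem_antidiagonal, Set.mem_Ioo] at hp
        exact if_neg (by omega)
    · rw [if_neg h.ne', Finset.sum_eq_single (m - ν, ν)]
      · have := mul_expCoeff ν hν (m - ν)
        rw [Nat.sub_add_cancel h.le] at this
        rw [this]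
        simp
      · intro p hp hne
        rw [Finset.mem_filter, Finset.HasAntidiagonal.mem_antidiagonal] at hp
        refine if_neg fun h2 => hne (Prod.ext ?_ h2)
        simp only
        omega
      · intro hnot
        refine absurd ?_ hnot
        rw [Finset.mem_filter, Finset.HasAntidiagonal.mem_antidiagonal, Set.mem_Ioo]
        simp only
        omega

/-- Summing a single harmonic over the shifted nodes `c - t_k` only involves the power sum of the
`exp (i t_k)`, which is real here. -/
lemma sum_harmonic {N : ℕ} (t : Fin N → ℝ) (m : ℕ) (r A B c : ℝ)
    (h : ∑ k, Complex.exp ((t k : ℂ) * Complex.I) ^ m = (r : ℂ)) :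
    ∑ k, (A * Real.cos ((m : ℝ) * (c - t k)) + B * Real.sin ((m : ℝ) * (c - t k))) =
      r * (A * Real.cos (m * c) + B * Real.sin (m * c)) := by
  have hexp : ∀ k, Complex.exp ((t k : ℂ) * Complex.I) ^ m =
      Complex.exp (((m * t k : ℝ) : ℂ) * Complex.I) := by
    intro k
    rw [← Complex.exp_nat_mul]
    push_cast
    ring_nf
  simp only [hexp] at h
  have hc : ∑ k, Real.cos (m * t k) = r := by
    have := congrArg Complex.re h
    simpa only [Complex.re_sum, Complex.exp_ofReal_mul_I_re, Complex.ofReal_re] using this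
  have hs : ∑ k, Real.sin (m * t k) = 0 := by
    have := congrArg Complex.im h
    simpa only [Complex.im_sum, Complex.exp_ofReal_mul_I_im, Complex.ofReal_im] using this
  calc _ = ∑ k, ((A * Real.cos (m * c) + B * Real.sin (m * c)) * Real.cos (m * t k) +
        (A * Real.sin (m * c) - B * Real.cos (m * c)) * Real.sin (m * t k)) := by
        refine Finset.sum_congr rfl fun k _ => ?_
        rw [mul_sub, Real.cos_sub, Real.sin_sub]
        ring
    _ = _ := by
        rw [Finset.sum_add_distrib, ← Finset.mul_sum, ← Finset.mul_sum, hc, hs]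
        ring

/-- recovery of Fourier coefficients. Let `n ≥ 2`,
`T_n(t) = ∑_{m=1}^n (a_m cos mt + b_m sin mt)`, `ν ∈ {1,…,n}`, and let
`t_1,…,t_{2n+1} ∈ [0,2π)` be the arguments of the roots of
`s_n(z) + z^{2n+1} s_n(1/z)`. Then
`a_ν = ∑_k T_n(−t_k)` and `b_ν = ∑_k T_n(π/(2ν) − t_k)`. -/
theorem statement11 (n ν : ℕ) (hn : 2 ≤ n) (hν : 1 ≤ ν) (hνn : ν ≤ n)
    (a b : ℕ → ℝ) (t : Fin (2 * n + 1) → ℝ)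
    (ht : ∀ k, t k ∈ Set.Ico (0 : ℝ) (2 * Real.pi))
    (hroots : (harmPoly n ν).roots =
      Multiset.map (fun k => Complex.exp ((t k : ℂ) * Complex.I)) Finset.univ.val) :
    a ν = (∑ k : Fin (2 * n + 1), ∑ m ∈ Finset.Icc 1 n,
            (a m * Real.cos ((m : ℝ) * (-(t k))) + b m * Real.sin ((m : ℝ) * (-(t k))))) ∧
    b ν = ∑ k : Fin (2 * n + 1), ∑ m ∈ Finset.Icc 1 n,
            (a m * Real.cos ((m : ℝ) * (Real.pi / (2 * ν) - t k)) +
             b m * Real.sin ((m : ℝ) * (Real.pi / (2 * ν) - t k))) := by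
  have key : ∀ c : ℝ, ∑ k : Fin (2 * n + 1), ∑ m ∈ Finset.Icc 1 n,
      (a m * Real.cos ((m : ℝ) * (c - t k)) + b m * Real.sin ((m : ℝ) * (c - t k))) =
      a ν * Real.cos (ν * c) + b ν * Real.sin (ν * c) := by
    intro c
    rw [Finset.sum_comm, Finset.sum_eq_single_of_mem ν (Finset.mem_Icc.2 ⟨hν, hνn⟩)]
    · rw [sum_harmonic t ν 1, one_mul]
      simpa using sum_pow_roots n ν hν _ hroots ν hν hνn
    · intro m hm hne
      obtain ⟨h1, h2⟩ := Finset.mem_Icc.1 hm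
      rw [sum_harmonic t m 0, zero_mul]
      simpa [hne] using sum_pow_roots n ν hν _ hroots m h1 h2
  refine ⟨?_, ?_⟩
  · simpa using (key 0).symm
  · have h0 : (ν : ℝ) ≠ 0 := by exact_mod_cast (by omega : ν ≠ 0)
    have hc : (ν : ℝ) * (Real.pi / (2 * ν)) = Real.pi / 2 := by field_simp
    rw [key, hc]
    simp
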